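/- Let 𝒳 be a finite set of d1×d2 real matrices whose entries all have absolute value αγ, let X be drawn uniformly at random from 𝒳, let Ω ⊂ [d1]×[d2] be a fixed set of size n, let Z have i.i.d. N(0,σ²) entries independent of X, and let Y = (X_{i,j} + Z_{i,j})_{(i,j)∈Ω}. Then for any measurable estimator X̂ of X computed from Y, the mutual information satisfies I(X; X̂) ≤ (n/2) log(1 + (αγ/σ)²). -/

import Mathlib

open MeasureTheory ProbabilityTheory Matrix
open scoped ENNReal NNReal Classical

noncomputable section

instance matrixMeasurableSpace {d1 d2 : ℕ} : MeasurableSpace (Matrix (Fin d1) (Fin d2) ℝ) :=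
  MeasurableSpace.pi

/-- Kullback–Leibler divergence between two measures (`∞` unless `μ ≪ ν` and the
log-likelihood ratio is `μ`-integrable). -/
def measureKL {α : Type*} [MeasurableSpace α] (μ ν : Measure α) : ℝ≥0∞ :=
  if μ ≪ ν ∧ Integrable (llr μ ν) μ then ENNReal.ofReal (∫ x, llr μ ν x ∂μ) else ⊤

/-- Mutual information of two random variables: the KL divergence of their joint law from
the product of their marginal laws. -/
def mutualInfo {Ω α β : Type*} [MeasurableSpace Ω] [MeasurableSpace α] [MeasurableSpace β]
    (μ : Measure Ω) (U : Ω → α) (V : Ω → β) : ℝ≥0∞ :=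
  measureKL (μ.map fun ω => (U ω, V ω)) ((μ.map U).prod (μ.map V))

/-!
Data processing and the variational bound `I(X; Y) ≤ D(P_{X,Y} ‖ P_X ⊗ Q)`, valid for every
probability measure `Q`, reduce the theorem to a relative entropy for the Gaussian channel. For `Q`
the centered Gaussian product measure with the second moments of the output, the logarithm of the
density of `P_{X,Y}` is a sum of quadratic polynomials whose expectations are
`1 / 2 * log (1 + E[Xᵢ ^ 2] / vᵢ)`. Coordinates outside `Ω` are handled by setting the signal to
zero there, which does not affect the estimator.
-/

open InformationTheory

section MutualInfo

variable {Ω α β γ : Type*} [MeasurableSpace Ω] [MeasurableSpace α] [MeasurableSpace β]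
  [MeasurableSpace γ]

lemma measureKL_eq_klDiv (μ ν : Measure α) [IsProbabilityMeasure μ] [IsProbabilityMeasure ν] :
    measureKL μ ν = klDiv μ ν := by
  simp [measureKL, klDiv_def]

lemma klDiv_fst_prod_le [StandardBorelSpace β] (ρ : Measure (α × β)) (P : Measure α)
    (Q : Measure β) [IsFiniteMeasure ρ] [IsFiniteMeasure P] [IsProbabilityMeasure Q] :
    klDiv ρ (ρ.fst.prod Q) ≤ klDiv ρ (P.prod Q) := by
  have : Nonempty β := nonempty_of_isProbabilityMeasure Q
  have chain_rule := klDiv_compProd_eq_add (μ := ρ.fst) (ν := P) (κ := ρ.condKernel)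
    (η := Kernel.const α Q)
  rw [ρ.disintegrate, Measure.compProd_const, Measure.compProd_const] at chain_rule
  exact chain_rule ▸ le_add_self

lemma klDiv_map_swap (ρ ν : Measure (α × β)) [IsFiniteMeasure ρ] [IsFiniteMeasure ν] :
    klDiv (ρ.map Prod.swap) (ν.map Prod.swap) = klDiv ρ ν := by
  refine le_antisymm (klDiv_map_le ρ ν measurable_swap) ?_
  simpa [Measure.map_map measurable_swap measurable_swap] using
    klDiv_map_le (ρ.map Prod.swap) (ν.map Prod.swap) measurable_swap

lemma klDiv_prod_snd_le [StandardBorelSpace α] (ρ : Measure (α × β)) (P : Measure α)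
    (Q : Measure β) [IsFiniteMeasure ρ] [IsProbabilityMeasure P] [IsFiniteMeasure Q] :
    klDiv ρ (P.prod ρ.snd) ≤ klDiv ρ (P.prod Q) := by
  rw [← klDiv_map_swap ρ (P.prod ρ.snd), ← klDiv_map_swap ρ (P.prod Q), Measure.prod_swap,
    Measure.prod_swap, ← Measure.fst_map_swap]
  exact klDiv_fst_prod_le (ρ.map Prod.swap) Q P

variable {μ : Measure Ω} {U : Ω → α} {V : Ω → β}

lemma klDiv_map_prodMk_comp_le [IsFiniteMeasure μ] (hU : Measurable U) (hV : Measurable V)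
    {f : β → γ} (hf : Measurable f) (Q : Measure β) [IsFiniteMeasure Q] :
    klDiv (μ.map fun ω => (U ω, f (V ω))) ((μ.map U).prod (Q.map f)) ≤
      klDiv (μ.map fun ω => (U ω, V ω)) ((μ.map U).prod Q) := by
  have hprod : (μ.map U).prod (Q.map f) = ((μ.map U).prod Q).map (Prod.map id f) := by
    rw [← Measure.map_prod_map _ _ measurable_id hf, Measure.map_id]
  have hjoint : (μ.map fun ω => (U ω, f (V ω))) =
      (μ.map fun ω => (U ω, V ω)).map (Prod.map id f) :=
    (Measure.map_map (measurable_id.prodMap hf) (hU.prodMk hV)).symm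
  rw [hprod, hjoint]
  exact klDiv_map_le _ _ (measurable_id.prodMap hf)

lemma mutualInfo_le_klDiv_prod [IsProbabilityMeasure μ] [StandardBorelSpace α] (hU : Measurable U)
    (hV : Measurable V) (Q : Measure β) [IsFiniteMeasure Q] :
    mutualInfo μ U V ≤ klDiv (μ.map fun ω => (U ω, V ω)) ((μ.map U).prod Q) := by
  have := Measure.isProbabilityMeasure_map (μ := μ) hU.aemeasurable
  have := Measure.isProbabilityMeasure_map (μ := μ) hV.aemeasurable
  have := Measure.isProbabilityMeasure_map (μ := μ) (hU.prodMk hV).aemeasurable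
  rw [mutualInfo, measureKL_eq_klDiv, ← Measure.snd_map_prodMk (Y := V) hU]
  exact klDiv_prod_snd_le (μ.map fun ω => (U ω, V ω)) (μ.map U) Q

lemma mutualInfo_comp_le_klDiv_prod [IsProbabilityMeasure μ] [StandardBorelSpace α]
    (hU : Measurable U) (hV : Measurable V) {f : β → γ} (hf : Measurable f) (Q : Measure β)
    [IsFiniteMeasure Q] :
    mutualInfo μ U (fun ω => f (V ω)) ≤
      klDiv (μ.map fun ω => (U ω, V ω)) ((μ.map U).prod Q) :=
  (mutualInfo_le_klDiv_prod hU (hf.comp hV) (Q.map f)).trans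
    (klDiv_map_prodMk_comp_le hU hV hf Q)

end MutualInfo

section Density

lemma klDiv_eq_ofReal_integral_log_of_eq_withDensity {α : Type*} [MeasurableSpace α]
    {ρ ν : Measure α} [IsProbabilityMeasure ρ] [IsProbabilityMeasure ν] {f : α → ℝ}
    (hf : Measurable f) (hf_nonneg : 0 ≤ f) (hρ : ρ = ν.withDensity fun x => ENNReal.ofReal (f x))
    (hlog_int : Integrable (fun x => Real.log (f x)) ρ) :
    klDiv ρ ν = ENNReal.ofReal (∫ x, Real.log (f x) ∂ρ) := by
  have hac : ρ ≪ ν := hρ ▸ withDensity_absolutelyContinuous _ _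
  have hrn : ρ.rnDeriv ν =ᵐ[ν] fun x => ENNReal.ofReal (f x) := by
    rw [hρ]
    exact Measure.rnDeriv_withDensity ν hf.ennreal_ofReal
  have hllr : llr ρ ν =ᵐ[ρ] fun x => Real.log (f x) := by
    filter_upwards [hac.ae_le hrn] with x hx
    simp only [llr_def, hx, ENNReal.toReal_ofReal (hf_nonneg x)]
  rw [klDiv_of_ac_of_integrable hac (hlog_int.congr hllr.symm), integral_congr_ae hllr]
  simp

lemma map_prodMk_eq_withDensity {α β γ : Type*} [MeasurableSpace α] [MeasurableSpace β]
    [MeasurableSpace γ] (P : Measure α) (N : Measure β) (Q : Measure γ) [SFinite N]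
    [SFinite Q] {g : α → β → γ} (hg : Measurable (Function.uncurry g)) {f : α → γ → ℝ≥0∞}
    (hf : Measurable (Function.uncurry f)) (hfiber : ∀ x, N.map (g x) = Q.withDensity (f x)) :
    (P.prod N).map (fun p => (p.1, g p.1 p.2)) =
      (P.prod Q).withDensity (fun q => f q.1 q.2) := by
  refine Measure.ext fun s hs => ?_
  have hT : Measurable fun p : α × β => (p.1, g p.1 p.2) := measurable_fst.prodMk hg
  have hf' : Measurable fun q : α × γ => f q.1 q.2 := hf
  rw [Measure.map_apply hT hs, Measure.prod_apply (hT hs), withDensity_apply _ hs,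
    ← lintegral_indicator hs, lintegral_prod _ (hf'.indicator hs).aemeasurable]
  refine lintegral_congr fun x => ?_
  have hsx : MeasurableSet (Prod.mk x ⁻¹' s) := measurable_prodMk_left hs
  calc N (g x ⁻¹' (Prod.mk x ⁻¹' s))
      = Q.withDensity (f x) (Prod.mk x ⁻¹' s) := by
        rw [← hfiber, Measure.map_apply hg.of_uncurry_left hsx]
    _ = ∫⁻ y, s.indicator (fun q => f q.1 q.2) (x, y) ∂Q := by
        rw [withDensity_apply _ hsx, ← lintegral_indicator hsx]
        rfl

lemma lintegral_pi_prod {ι : Type*} [Fintype ι] {β : ι → Type*} [∀ i, MeasurableSpace (β i)]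
    (μ : ∀ i, Measure (β i)) [∀ i, IsProbabilityMeasure (μ i)] {f : ∀ i, β i → ℝ≥0∞}
    (hf : ∀ i, Measurable (f i)) :
    ∫⁻ x, ∏ i, f i (x i) ∂Measure.pi μ = ∏ i, ∫⁻ y, f i y ∂μ i := by
  have hind := iIndepFun_pi (μ := μ) (X := f) fun i => (hf i).aemeasurable
  rw [lintegral_prod_eq_prod_lintegral_of_indepFun Finset.univ
    (fun i (x : ∀ i, β i) => f i (x i)) hind fun i => (hf i).comp (measurable_pi_apply i)]
  exact Finset.prod_congr rfl fun i _ => (measurePreserving_eval μ i).lintegral_comp (hf i)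

lemma pi_eq_withDensity_prod {ι : Type*} [Fintype ι] {β : ι → Type*}
    [∀ i, MeasurableSpace (β i)] (μ ν : ∀ i, Measure (β i)) [∀ i, IsProbabilityMeasure (μ i)]
    [∀ i, SigmaFinite (ν i)] {f : ∀ i, β i → ℝ≥0∞} (hf : ∀ i, Measurable (f i))
    (hν : ∀ i, ν i = (μ i).withDensity (f i)) :
    Measure.pi ν = (Measure.pi μ).withDensity fun x => ∏ i, f i (x i) := by
  refine Measure.pi_eq fun s hs => ?_
  have hindicator : (Set.univ.pi s).indicator (fun x => ∏ i, f i (x i)) =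
      fun x => ∏ i, (s i).indicator (f i) (x i) := by
    funext x
    by_cases hx : x ∈ Set.univ.pi s
    · rw [Set.indicator_of_mem hx]
      exact Finset.prod_congr rfl fun i _ => (Set.indicator_of_mem (hx i trivial) _).symm
    · obtain ⟨i, hi⟩ : ∃ i, x i ∉ s i := by simpa [Set.mem_pi] using hx
      rw [Set.indicator_of_notMem hx]
      exact (Finset.prod_eq_zero (Finset.mem_univ i) (Set.indicator_of_notMem hi _)).symm
  rw [withDensity_apply _ (MeasurableSet.univ_pi hs),
    ← lintegral_indicator (MeasurableSet.univ_pi hs), hindicator,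
    lintegral_pi_prod μ fun i => (hf i).indicator (hs i)]
  exact Finset.prod_congr rfl fun i _ => by
    rw [hν, withDensity_apply _ (hs i), lintegral_indicator (hs i)]

end Density

section GaussianRatio

/-- The density of the Gaussian measure with mean `m` and variance `v` with respect to the centered
Gaussian measure with variance `w`. -/
def gaussianRatio (m : ℝ) (v w : ℝ≥0) (y : ℝ) : ℝ :=
  gaussianPDFReal m v y / gaussianPDFReal 0 w y

variable {v w : ℝ≥0}

lemma gaussianRatio_pos (m : ℝ) (hv : v ≠ 0) (hw : w ≠ 0) (y : ℝ) : 0 < gaussianRatio m v w y :=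
  div_pos (gaussianPDFReal_pos m v y hv) (gaussianPDFReal_pos 0 w y hw)

lemma measurable_gaussianRatio (m : ℝ) (v w : ℝ≥0) : Measurable (gaussianRatio m v w) :=
  (measurable_gaussianPDFReal m v).div (measurable_gaussianPDFReal 0 w)

lemma measurable_uncurry_gaussianRatio (v w : ℝ≥0) :
    Measurable fun p : ℝ × ℝ => gaussianRatio p.1 v w p.2 :=
  (measurable_uncurry_gaussianPDFReal.comp
    (f := fun p : ℝ × ℝ => (p.1, v, p.2)) (by fun_prop)).div
    ((measurable_gaussianPDFReal 0 w).comp measurable_snd)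

lemma gaussianReal_eq_withDensity_gaussianRatio (m : ℝ) (hv : v ≠ 0) (hw : w ≠ 0) :
    gaussianReal m v =
      (gaussianReal 0 w).withDensity fun y => ENNReal.ofReal (gaussianRatio m v w y) := by
  rw [gaussianReal_of_var_ne_zero m hv, gaussianReal_of_var_ne_zero 0 hw,
    ← withDensity_mul _ (measurable_gaussianPDF 0 w)
      (measurable_gaussianRatio m v w).ennreal_ofReal]
  congr 1
  funext y
  have hpos := gaussianPDFReal_pos 0 w y hw
  rw [Pi.mul_apply, gaussianPDF, gaussianPDF, ← ENNReal.ofReal_mul hpos.le, gaussianRatio,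
    mul_div_cancel₀ _ hpos.ne']

lemma log_gaussianPDFReal (m : ℝ) (hv : v ≠ 0) (y : ℝ) :
    Real.log (gaussianPDFReal m v y) =
      -(1 / 2 * Real.log (2 * Real.pi * v)) - (y - m) ^ 2 / (2 * v) := by
  have hpos : (0 : ℝ) < 2 * Real.pi * v := by positivity
  rw [gaussianPDFReal, Real.log_mul (by positivity) (Real.exp_ne_zero _), Real.log_exp,
    Real.log_inv, Real.log_sqrt hpos.le]
  ring

lemma log_gaussianRatio_add (m : ℝ) (hv : v ≠ 0) (hw : w ≠ 0) (z : ℝ) :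
    Real.log (gaussianRatio m v w (m + z)) =
      1 / 2 * Real.log (w / v) + ((m + z) ^ 2 / (2 * w) - z ^ 2 / (2 * v)) := by
  have hv' : (v : ℝ) ≠ 0 := by exact_mod_cast hv
  have hw' : (w : ℝ) ≠ 0 := by exact_mod_cast hw
  rw [gaussianRatio,
    Real.log_div (gaussianPDFReal_pos _ _ _ hv).ne' (gaussianPDFReal_pos _ _ _ hw).ne',
    log_gaussianPDFReal m hv, log_gaussianPDFReal 0 hw, Real.log_mul (by positivity) hv',
    Real.log_mul (by positivity) hw', Real.log_div hw' hv']
  ring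

end GaussianRatio

section SecondMoments

variable {Ω : Type*} [MeasurableSpace Ω] {μ : Measure Ω} {X Z : Ω → ℝ} {v w : ℝ≥0}

lemma memLp_two_of_ae_abs_eq [IsFiniteMeasure μ] {a : ℝ} (hX : AEStronglyMeasurable X μ)
    (ha : ∀ᵐ ω ∂μ, |X ω| = a) : MemLp X 2 μ :=
  MemLp.of_bound hX a (ha.mono fun _ h => h.le)

lemma integral_sq_of_ae_abs_eq [IsProbabilityMeasure μ] {a : ℝ} (ha : ∀ᵐ ω ∂μ, |X ω| = a) :
    ∫ ω, X ω ^ 2 ∂μ = a ^ 2 := by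
  rw [integral_congr_ae (ha.mono fun ω h => show X ω ^ 2 = a ^ 2 by rw [← h, sq_abs])]
  simp

lemma integral_add_sq_of_indepFun (hX : MemLp X 2 μ) (hZ : MemLp Z 2 μ) (hXZ : IndepFun X Z μ)
    (hZ_mean : ∫ ω, Z ω ∂μ = 0) :
    ∫ ω, (X ω + Z ω) ^ 2 ∂μ = ∫ ω, X ω ^ 2 ∂μ + ∫ ω, Z ω ^ 2 ∂μ := by
  have hcross : ∫ ω, X ω * Z ω ∂μ = 0 := by
    rw [hXZ.integral_fun_mul_eq_mul_integral hX.1 hZ.1, hZ_mean, mul_zero]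
  have hXZ_int : Integrable (fun ω => 2 * (X ω * Z ω)) μ := (hX.integrable_mul hZ).const_mul 2
  have hsum_int : Integrable (fun ω => X ω ^ 2 + 2 * (X ω * Z ω)) μ := hX.integrable_sq.add hXZ_int
  calc ∫ ω, (X ω + Z ω) ^ 2 ∂μ
      = ∫ ω, X ω ^ 2 + 2 * (X ω * Z ω) + Z ω ^ 2 ∂μ := by congr with ω; ring
    _ = ∫ ω, X ω ^ 2 ∂μ + ∫ ω, Z ω ^ 2 ∂μ := by
        rw [integral_add hsum_int hZ.integrable_sq,
          integral_add hX.integrable_sq hXZ_int, integral_const_mul, hcross, mul_zero, add_zero]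

lemma integral_sq_of_hasLaw_gaussianReal (hZ : HasLaw Z (gaussianReal 0 v) μ) :
    ∫ ω, Z ω ^ 2 ∂μ = v := by
  have hmean : ∫ ω, Z ω ∂μ = 0 := by rw [hZ.integral_eq, integral_id_gaussianReal]
  rw [← variance_of_integral_eq_zero hZ.aemeasurable hmean, hZ.variance_eq,
    variance_id_gaussianReal]

lemma memLp_two_of_hasLaw_gaussianReal {m : ℝ} (hZ : HasLaw Z (gaussianReal m v) μ) :
    MemLp Z 2 μ := by
  have h := memLp_id_gaussianReal' (μ := m) (v := v) 2 (by simp)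
  rw [← hZ.map_eq] at h
  exact h.comp_of_map hZ.aemeasurable

lemma integrable_log_gaussianRatio_add [IsFiniteMeasure μ] (hX : MemLp X 2 μ) (hZ : MemLp Z 2 μ)
    (hv : v ≠ 0) (hw : w ≠ 0) :
    Integrable (fun ω => Real.log (gaussianRatio (X ω) v w (X ω + Z ω))) μ := by
  simp_rw [log_gaussianRatio_add _ hv hw]
  exact (integrable_const _).add
    (((hX.add hZ).integrable_sq.div_const _).sub (hZ.integrable_sq.div_const _))

lemma ne_zero_of_coe_eq_add_integral_sq (hv : v ≠ 0) (hw : (w : ℝ) = v + ∫ ω, X ω ^ 2 ∂μ) :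
    w ≠ 0 := by
  have hw_pos : (0 : ℝ) < w := hw ▸ by positivity
  exact_mod_cast hw_pos.ne'

lemma integral_log_gaussianRatio_add [IsProbabilityMeasure μ] (hX : MemLp X 2 μ)
    (hZ : HasLaw Z (gaussianReal 0 v) μ) (hXZ : IndepFun X Z μ) (hv : v ≠ 0)
    (hw : (w : ℝ) = v + ∫ ω, X ω ^ 2 ∂μ) :
    ∫ ω, Real.log (gaussianRatio (X ω) v w (X ω + Z ω)) ∂μ =
      1 / 2 * Real.log (1 + (∫ ω, X ω ^ 2 ∂μ) / v) := by
  have hZ2 := memLp_two_of_hasLaw_gaussianReal hZ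
  have hw_ne := ne_zero_of_coe_eq_add_integral_sq hv hw
  have hv' : (v : ℝ) ≠ 0 := by exact_mod_cast hv
  have hw' : (w : ℝ) ≠ 0 := by exact_mod_cast hw_ne
  have hZ_mean : ∫ ω, Z ω ∂μ = 0 := by rw [hZ.integral_eq, integral_id_gaussianReal]
  have houtput : ∫ ω, (X ω + Z ω) ^ 2 ∂μ = w := by
    rw [integral_add_sq_of_indepFun hX hZ2 hXZ hZ_mean, integral_sq_of_hasLaw_gaussianReal hZ, hw,
      add_comm]
  have houtput_int : Integrable (fun ω => (X ω + Z ω) ^ 2 / (2 * (w : ℝ))) μ :=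
    (hX.add hZ2).integrable_sq.div_const _
  have hnoise_int : Integrable (fun ω => Z ω ^ 2 / (2 * (v : ℝ))) μ :=
    hZ2.integrable_sq.div_const _
  have hdiff_int : Integrable
      (fun ω => (X ω + Z ω) ^ 2 / (2 * (w : ℝ)) - Z ω ^ 2 / (2 * (v : ℝ))) μ :=
    houtput_int.sub hnoise_int
  calc ∫ ω, Real.log (gaussianRatio (X ω) v w (X ω + Z ω)) ∂μ
      = 1 / 2 * Real.log (w / v) + (w / (2 * w) - v / (2 * v)) := by
        simp_rw [log_gaussianRatio_add _ hv hw_ne]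
        rw [integral_add (integrable_const _) hdiff_int,
          integral_sub houtput_int hnoise_int, integral_div, integral_div, houtput,
          integral_sq_of_hasLaw_gaussianReal hZ]
        simp
    _ = 1 / 2 * Real.log (1 + (∫ ω, X ω ^ 2 ∂μ) / v) := by
        rw [hw, add_div, div_self hv', ← hw]
        field_simp
        ring

end SecondMoments

section UniformMatrix

instance standardBorelSpace_matrix {d1 d2 : ℕ} :
    StandardBorelSpace (Matrix (Fin d1) (Fin d2) ℝ) :=
  inferInstanceAs (StandardBorelSpace (Fin d1 → Fin d2 → ℝ))

lemma measurable_matrix_entry {d1 d2 : ℕ} (i : Fin d1) (j : Fin d2) :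
    Measurable fun X : Matrix (Fin d1) (Fin d2) ℝ => X i j :=
  (measurable_pi_apply (X := fun _ : Fin d2 => ℝ) j).comp
    (measurable_pi_apply (X := fun _ : Fin d1 => Fin d2 → ℝ) i)

lemma ae_mem_of_uniformOfFinset {α : Type*} [MeasurableSpace α] [MeasurableSingletonClass α]
    (s : Finset α) (hs : s.Nonempty) :
    ∀ᵐ x ∂(PMF.uniformOfFinset s hs).toMeasure, x ∈ s := by
  rw [ae_iff]
  change (PMF.uniformOfFinset s hs).toMeasure (s : Set α)ᶜ = 0
  rw [PMF.toMeasure_apply_eq_zero_iff _ s.measurableSet.compl]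
  simp [disjoint_compl_right]

end UniformMatrix

section GaussianChannel

variable {𝓧 ι : Type*} [MeasurableSpace 𝓧] [Fintype ι]

/-- Noise of parallel Gaussian channels: independent centered Gaussian coordinates, the `i`-th one
with variance `v i`. -/
abbrev gaussianNoise (v : ι → ℝ≥0) : Measure (ι → ℝ) :=
  Measure.pi fun i => gaussianReal 0 (v i)

lemma gaussianNoise_map_const_add {v w : ι → ℝ≥0} (m : ι → ℝ) (hv : ∀ i, v i ≠ 0)
    (hw : ∀ i, w i ≠ 0) :
    (gaussianNoise v).map (m + ·) = (gaussianNoise w).withDensity fun y =>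
      ENNReal.ofReal (∏ i, gaussianRatio (m i) (v i) (w i) (y i)) := by
  have hshift : (gaussianNoise v).map (m + ·) = Measure.pi fun i => gaussianReal (m i) (v i) :=
    (measurePreserving_pi _ _ fun i =>
      ⟨measurable_const_add (m i), by rw [gaussianReal_map_const_add, zero_add]⟩).map_eq
  rw [hshift, pi_eq_withDensity_prod (fun i => gaussianReal 0 (w i)) _
    (fun i => (measurable_gaussianRatio (m i) (v i) (w i)).ennreal_ofReal)
    fun i => gaussianReal_eq_withDensity_gaussianRatio (m i) (hv i) (hw i)]
  congr with y
  exact (ENNReal.ofReal_prod_of_nonneg fun i _ => (gaussianRatio_pos _ (hv i) (hw i) _).le).symm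

lemma measurable_prod_gaussianRatio {m : 𝓧 → ι → ℝ} (hm : Measurable m) (v w : ι → ℝ≥0) :
    Measurable fun q : 𝓧 × (ι → ℝ) => ∏ i, gaussianRatio (m q.1 i) (v i) (w i) (q.2 i) :=
  Finset.measurable_fun_prod _ fun i _ => (measurable_uncurry_gaussianRatio (v i) (w i)).comp
    (f := fun q : 𝓧 × (ι → ℝ) => (m q.1 i, q.2 i)) (by fun_prop)

lemma map_gaussianChannel_eq_withDensity (P : Measure 𝓧) {m : 𝓧 → ι → ℝ}
    (hm : Measurable m) {v w : ι → ℝ≥0} (hv : ∀ i, v i ≠ 0) (hw : ∀ i, w i ≠ 0) :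
    (P.prod (gaussianNoise v)).map (fun p => (p.1, m p.1 + p.2)) =
      (P.prod (gaussianNoise w)).withDensity fun q =>
        ENNReal.ofReal (∏ i, gaussianRatio (m q.1 i) (v i) (w i) (q.2 i)) :=
  map_prodMk_eq_withDensity P (gaussianNoise v) (gaussianNoise w)
    (g := fun x z => m x + z) (by fun_prop)
    (f := fun x y => ENNReal.ofReal (∏ i, gaussianRatio (m x i) (v i) (w i) (y i)))
    (measurable_prod_gaussianRatio hm v w).ennreal_ofReal
    fun x => gaussianNoise_map_const_add (m x) hv hw

variable {P : Measure 𝓧} {m : 𝓧 → ι → ℝ} {v w : ι → ℝ≥0} {i : ι}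

lemma memLp_signal_gaussianChannel (v : ι → ℝ≥0) (hm2 : MemLp (fun x => m x i) 2 P) :
    MemLp (fun p : 𝓧 × (ι → ℝ) => m p.1 i) 2 (P.prod (gaussianNoise v)) :=
  hm2.comp_measurePreserving measurePreserving_fst

variable [IsProbabilityMeasure P]

lemma hasLaw_noise_gaussianChannel (v : ι → ℝ≥0) (i : ι) :
    HasLaw (fun p : 𝓧 × (ι → ℝ) => p.2 i) (gaussianReal 0 (v i)) (P.prod (gaussianNoise v)) :=
  ((measurePreserving_eval (fun i => gaussianReal 0 (v i)) i).comp measurePreserving_snd).hasLaw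

lemma integrable_log_gaussianRatio_gaussianChannel (hm2 : MemLp (fun x => m x i) 2 P)
    (hv : v i ≠ 0) (hw : w i ≠ 0) :
    Integrable (fun p => Real.log (gaussianRatio (m p.1 i) (v i) (w i) (m p.1 i + p.2 i)))
      (P.prod (gaussianNoise v)) :=
  integrable_log_gaussianRatio_add (memLp_signal_gaussianChannel v hm2)
    (memLp_two_of_hasLaw_gaussianReal (hasLaw_noise_gaussianChannel v i)) hv hw

lemma integral_log_gaussianRatio_gaussianChannel (hm : Measurable m)
    (hm2 : MemLp (fun x => m x i) 2 P) (hv : v i ≠ 0)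
    (hw : (w i : ℝ) = v i + ∫ x, m x i ^ 2 ∂P) :
    ∫ p, Real.log (gaussianRatio (m p.1 i) (v i) (w i) (m p.1 i + p.2 i))
      ∂P.prod (gaussianNoise v) = 1 / 2 * Real.log (1 + (∫ x, m x i ^ 2 ∂P) / v i) := by
  have hsignal : ∫ p, m p.1 i ^ 2 ∂P.prod (gaussianNoise v) = ∫ x, m x i ^ 2 ∂P := by
    simp [integral_fun_fst (fun x => m x i ^ 2)]
  have hindep : IndepFun (fun p : 𝓧 × (ι → ℝ) => m p.1 i) (fun p => p.2 i)
      (P.prod (gaussianNoise v)) :=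
    indepFun_prod (X := fun x => m x i) (Y := fun z : ι → ℝ => z i) (by fun_prop) (by fun_prop)
  rw [← hsignal] at hw ⊢
  exact integral_log_gaussianRatio_add (memLp_signal_gaussianChannel v hm2)
    (hasLaw_noise_gaussianChannel v i) hindep hv hw

lemma klDiv_gaussianChannel (hm : Measurable m) (hm2 : ∀ i, MemLp (fun x => m x i) 2 P)
    (hv : ∀ i, v i ≠ 0) (hw : ∀ i, (w i : ℝ) = v i + ∫ x, m x i ^ 2 ∂P) :
    klDiv ((P.prod (gaussianNoise v)).map fun p => (p.1, m p.1 + p.2))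
        (P.prod (gaussianNoise w)) =
      ENNReal.ofReal (∑ i, 1 / 2 * Real.log (1 + (∫ x, m x i ^ 2 ∂P) / v i)) := by
  have hw_ne : ∀ i, w i ≠ 0 := fun i => ne_zero_of_coe_eq_add_integral_sq (hv i) (hw i)
  have hchannel : Measurable fun p : 𝓧 × (ι → ℝ) => (p.1, m p.1 + p.2) := by fun_prop
  have := Measure.isProbabilityMeasure_map (μ := P.prod (gaussianNoise v)) hchannel.aemeasurable
  have hdensity := measurable_prod_gaussianRatio hm v w
  have hpos : ∀ x i y, 0 < gaussianRatio (m x i) (v i) (w i) y :=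
    fun x i => gaussianRatio_pos _ (hv i) (hw_ne i)
  have hlog : ∀ p : 𝓧 × (ι → ℝ),
      Real.log (∏ i, gaussianRatio (m p.1 i) (v i) (w i) ((m p.1 + p.2) i)) =
        ∑ i, Real.log (gaussianRatio (m p.1 i) (v i) (w i) (m p.1 i + p.2 i)) :=
    fun p => Real.log_prod fun i _ => (hpos _ i _).ne'
  have hlog_int : ∀ i, Integrable
      (fun p => Real.log (gaussianRatio (m p.1 i) (v i) (w i) (m p.1 i + p.2 i)))
      (P.prod (gaussianNoise v)) :=
    fun i => integrable_log_gaussianRatio_gaussianChannel (hm2 i) (hv i) (hw_ne i)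
  rw [klDiv_eq_ofReal_integral_log_of_eq_withDensity hdensity
    (fun q => Finset.prod_nonneg fun i _ => (hpos _ i _).le)
    (map_gaussianChannel_eq_withDensity P hm hv hw_ne)]
  · rw [integral_map hchannel.aemeasurable hdensity.log.aestronglyMeasurable]
    simp_rw [hlog]
    rw [integral_finsetSum _ fun i _ => hlog_int i]
    simp_rw [integral_log_gaussianRatio_gaussianChannel hm (hm2 _) (hv _) (hw _)]
  · rw [integrable_map_measure hdensity.log.aestronglyMeasurable hchannel.aemeasurable]
    exact (integrable_finsetSum _ fun i _ => hlog_int i).congr (ae_of_all _ fun p => (hlog p).symm)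

lemma mutualInfo_gaussianChannel_le {𝓨 : Type*} [MeasurableSpace 𝓨] [StandardBorelSpace 𝓧]
    (hm : Measurable m) (hm2 : ∀ i, MemLp (fun x => m x i) 2 P) (hv : ∀ i, v i ≠ 0)
    {est : (ι → ℝ) → 𝓨} (hest : Measurable est) :
    mutualInfo (P.prod (gaussianNoise v)) Prod.fst (fun ω => est (m ω.1 + ω.2)) ≤
      ENNReal.ofReal (∑ i, 1 / 2 * Real.log (1 + (∫ x, m x i ^ 2 ∂P) / v i)) := by
  let w : ι → ℝ≥0 := fun i => v i + (∫ x, m x i ^ 2 ∂P).toNNReal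
  have hw : ∀ i, (w i : ℝ) = v i + ∫ x, m x i ^ 2 ∂P := fun i => by
    rw [NNReal.coe_add, Real.coe_toNNReal _ (integral_nonneg fun x => sq_nonneg _)]
  calc mutualInfo (P.prod (gaussianNoise v)) Prod.fst (fun ω => est (m ω.1 + ω.2))
      ≤ klDiv ((P.prod (gaussianNoise v)).map fun p => (p.1, m p.1 + p.2))
          (((P.prod (gaussianNoise v)).map Prod.fst).prod (gaussianNoise w)) :=
        mutualInfo_comp_le_klDiv_prod measurable_fst (by fun_prop) hest (gaussianNoise w)
    _ = ENNReal.ofReal (∑ i, 1 / 2 * Real.log (1 + (∫ x, m x i ^ 2 ∂P) / v i)) := by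
        rw [measurePreserving_fst.map_eq, klDiv_gaussianChannel hm hm2 hv hw]

end GaussianChannel

theorem mutual_information_bound_general {𝓧 𝓨 ι : Type*} [MeasurableSpace 𝓧]
    [StandardBorelSpace 𝓧] [MeasurableSpace 𝓨] [Fintype ι] (P : Measure 𝓧)
    [IsProbabilityMeasure P] {m : 𝓧 → ι → ℝ} (hm : Measurable m) {a σ : ℝ} (hσ : σ ≠ 0)
    (S : Finset ι) (hm2 : ∀ i ∈ S, MemLp (fun x => m x i) 2 P)
    (hpower : ∀ i ∈ S, ∫ x, m x i ^ 2 ∂P ≤ a ^ 2) {est : (ι → ℝ) → 𝓨} (hest : Measurable est)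
    (hdep : ∀ y y' : ι → ℝ, (∀ i ∈ S, y i = y' i) → est y = est y') :
    mutualInfo (P.prod (Measure.pi fun _ => gaussianReal 0 (σ ^ 2).toNNReal))
        (fun ω => ω.1) (fun ω => est (fun i => m ω.1 i + ω.2 i)) ≤
      ENNReal.ofReal (S.card / 2 * Real.log (1 + (a / σ) ^ 2)) := by
  let m' : 𝓧 → ι → ℝ := fun x i => if i ∈ S then m x i else 0
  have hm' : Measurable m' := measurable_pi_lambda _ fun i => by
    by_cases hi : i ∈ S <;> simp only [m', hi, if_true, if_false] <;> fun_prop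
  have hm2' : ∀ i, MemLp (fun x => m' x i) 2 P := fun i => by
    by_cases hi : i ∈ S
    · simpa only [m', hi, if_true] using hm2 i hi
    · simp [m', hi]
  have hest_eq : (fun ω : 𝓧 × (ι → ℝ) => est (fun i => m ω.1 i + ω.2 i)) =
      fun ω => est (m' ω.1 + ω.2) :=
    funext fun ω => hdep _ _ fun i hi => by simp [m', hi]
  have hv : (σ ^ 2).toNNReal ≠ 0 := (Real.toNNReal_pos.2 (sq_pos_of_ne_zero hσ)).ne'
  have hterm : ∀ i, 1 / 2 * Real.log (1 + (∫ x, m' x i ^ 2 ∂P) / (σ ^ 2).toNNReal) ≤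
      if i ∈ S then 1 / 2 * Real.log (1 + (a / σ) ^ 2) else 0 := fun i => by
    by_cases hi : i ∈ S
    · simp only [m', hi, if_true, Real.coe_toNNReal _ (sq_nonneg σ), div_pow]
      gcongr
      exact hpower i hi
    · simp [m', hi]
  rw [hest_eq]
  refine (mutualInfo_gaussianChannel_le hm' hm2' (fun _ => hv) hest).trans
    (ENNReal.ofReal_le_ofReal ((Finset.sum_le_sum fun i _ => hterm i).trans_eq ?_))
  rw [Finset.sum_ite_mem, Finset.univ_inter, Finset.sum_const, nsmul_eq_mul]
  ring

/-- **Lemma (mutual information bound).**  If `X` is uniform on a finite set `𝒳` of matrices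
with all entries of absolute value `αγ`, `Z` has i.i.d. `N(0,σ²)` entries independent of `X`,
and `X̂` is any measurable estimator computed from `(X_{ij} + Z_{ij})_{(i,j) ∈ Ω}` with
`|Ω| = n`, then `I(X; X̂) ≤ (n/2) log(1 + (αγ/σ)²)`. -/
theorem mutual_information_bound
    (d1 d2 n : ℕ) (α γ σ : ℝ) (hσ : 0 < σ)
    (𝒳 : Finset (Matrix (Fin d1) (Fin d2) ℝ)) (hne : 𝒳.Nonempty)
    (hentries : ∀ X ∈ 𝒳, ∀ i j, |X i j| = α * γ)
    (Ω : Finset (Fin d1 × Fin d2)) (hΩ : Ω.card = n)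
    (est : ((Fin d1 × Fin d2) → ℝ) → Matrix (Fin d1) (Fin d2) ℝ)
    (hmeas : Measurable est)
    (hdep : ∀ y y' : (Fin d1 × Fin d2) → ℝ, (∀ ij ∈ Ω, y ij = y' ij) → est y = est y') :
    mutualInfo
        (((PMF.uniformOfFinset 𝒳 hne).toMeasure).prod
          (Measure.pi fun _ : Fin d1 × Fin d2 => gaussianReal 0 (σ ^ 2).toNNReal))
        (fun ω => ω.1)
        (fun ω => est (fun ij => ω.1 ij.1 ij.2 + ω.2 ij)) ≤
      ENNReal.ofReal ((n / 2) * Real.log (1 + (α * γ / σ) ^ 2)) := by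
  subst hΩ
  have habs : ∀ i j, ∀ᵐ X ∂(PMF.uniformOfFinset 𝒳 hne).toMeasure, |X i j| = α * γ := fun i j =>
    (ae_mem_of_uniformOfFinset 𝒳 hne).mono fun X hX => hentries X hX i j
  exact mutual_information_bound_general _
    (measurable_pi_lambda _ fun ij => measurable_matrix_entry ij.1 ij.2) hσ.ne' Ω
    (fun ij _ => memLp_two_of_ae_abs_eq (measurable_matrix_entry _ _).aestronglyMeasurable
      (habs ij.1 ij.2))
    (fun ij _ => (integral_sq_of_ae_abs_eq (habs ij.1 ij.2)).le) hmeas hdep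

end
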